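/- Let A ⊕ B = ℤ_M, where p is a prime with p^n ‖ M. Suppose p > gcd(|B|, M/p^n). If M/p ∉ Div(A), then every fiber x * F_p (x ∈ ℤ_M) splits with parity (A, B). -/

import Mathlib

/-!
Consider two points of a fiber, `a + b` and `a' + b'`; their difference is a multiple `k M / p` with
`p ∤ k`. Sands's theorem `Div(A) ∩ Div(B) = {M}` (`IsTiling.sub_eq_zero_of_gcd_eq`) forces one of
`a - a'`, `b - b'` to be divisible by `p ^ n` and the other to be divisible by exactly `p ^ (n - 1)`
(`IsTiling.pair_dichotomy`). So the pairs of points of the fiber fall into two types, each of which is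
an equivalence relation; two equivalence relations that together cover all pairs cannot both be
proper, and the whole fiber has one of the two parities.

Suppose the parity is `(B, A)`. Then the `p` elements of `B` used in the fiber all lie in one class
modulo `p ^ n`. By the plane bound (`IsTiling.classCount_le_gcd`) this class contains at most
`gcd(|B|, M / p ^ n) < p` elements of `B`, so two points of the fiber share their `B`-component. The
difference of their `A`-components is then a nonzero multiple of `M / p`, whose
gcd with `M` is `M / p`, contrary to `M / p ∉ Div(A)`.

Sands's theorem comes from invariance of tilings under dilation of one factor by a large prime. The
plane bound comes from cyclotomic divisibility: for each `t < n`, the polynomial `Φ_{p^(t+1)}` divides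
the mask polynomial of `A` or of `B`, that is, that set is equidistributed from level `t` to `t + 1`.
-/

/-- `A ⊕ B = ℤ_M`: every element of `ZMod M` has a unique representation `a + b`
with `a ∈ A`, `b ∈ B`. -/
def IsTiling (M : ℕ) (A B : Finset (ZMod M)) : Prop :=
  ∀ z : ZMod M, ∃! ab : ZMod M × ZMod M, ab.1 ∈ A ∧ ab.2 ∈ B ∧ ab.1 + ab.2 = z

/-- The divisor set `Div(S) = {gcd(s - s', M) : s, s' ∈ S}`, gcd computed with the
canonical representative in `{0, …, M-1}` (so `gcd(0, M) = M`). -/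
def DivSet (M : ℕ) (S : Finset (ZMod M)) : Set ℕ :=
  {d | ∃ s ∈ S, ∃ s' ∈ S, d = Nat.gcd (s - s').val M}

/-- The fiber `x * F_p = {x + ν·(M/p) : 0 ≤ ν < p}` in the `p` direction. -/
def fiberSet (M p : ℕ) (x : ZMod M) : Set (ZMod M) :=
  {z | ∃ ν < p, z = x + ((ν * (M / p) : ℕ) : ZMod M)}

/-- `Σ_A(Z)`: the elements of `A` used in representations of elements of `Z`
in the tiling `A ⊕ B`. -/
def SigmaSet (M : ℕ) (A B : Finset (ZMod M)) (Z : Set (ZMod M)) : Set (ZMod M) :=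
  {a | a ∈ A ∧ ∃ b ∈ B, a + b ∈ Z}

/-- `Z` splits with parity `(A, B)`: `p^n` divides all differences of elements of
`Σ_A(Z)`, and `p^{n-1}` exactly divides differences of distinct elements of `Σ_B(Z)`
(divisibility of differences measured on canonical representatives in `ZMod M`). -/
def SplitsParity (M p n : ℕ) (A B : Finset (ZMod M)) (Z : Set (ZMod M)) : Prop :=
  (∀ a ∈ SigmaSet M A B Z, ∀ a' ∈ SigmaSet M A B Z, (p ^ n : ℕ) ∣ ((a - a' : ZMod M)).val) ∧
  (∀ b ∈ SigmaSet M B A Z, ∀ b' ∈ SigmaSet M B A Z, b ≠ b' →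
    (p ^ (n - 1) : ℕ) ∣ ((b - b' : ZMod M)).val ∧ ¬ (p ^ n : ℕ) ∣ ((b - b' : ZMod M)).val)


/-! ### Dilations of tilings and Sands's theorem -/

/-- Summing over `A × B` along `(a, b) ↦ a + b` is summing over `ℤ_M`. -/
theorem IsTiling.sum_add {M : ℕ} [NeZero M] {A B : Finset (ZMod M)} (h : IsTiling M A B)
    {E : Type*} [AddCommMonoid E] (f : ZMod M → E) :
    ∑ ab ∈ A ×ˢ B, f (ab.1 + ab.2) = ∑ z, f z := by
  refine Finset.sum_nbij (fun ab => ab.1 + ab.2) (by simp) ?_ ?_ (by simp)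
  · rintro ⟨a, b⟩ hab ⟨a', b'⟩ hab' heq
    simp only [Finset.coe_product, Set.mem_prod, Finset.mem_coe] at hab hab'
    exact (h (a + b)).unique ⟨hab.1, hab.2, rfl⟩ ⟨hab'.1, hab'.2, heq.symm⟩
  · intro z _
    obtain ⟨ab, ⟨h1, h2, h3⟩, _⟩ := h z
    exact ⟨ab, by simp [h1, h2], h3⟩

theorem IsTiling.card_mul {M : ℕ} [NeZero M] {A B : Finset (ZMod M)} (h : IsTiling M A B) :
    A.card * B.card = M := by
  have := h.sum_add (fun _ => 1)
  simpa [ZMod.card] using this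

theorem IsTiling.symm {M : ℕ} {A B : Finset (ZMod M)} (h : IsTiling M A B) :
    IsTiling M B A := by
  intro z
  obtain ⟨⟨a, b⟩, ⟨h1, h2, h3⟩, hu⟩ := h z
  refine ⟨(b, a), ⟨h2, h1, by simpa [add_comm] using h3⟩, ?_⟩
  rintro ⟨b', a'⟩ ⟨h1', h2', h3'⟩
  have := hu (a', b') ⟨h2', h1', by simpa [add_comm] using h3'⟩
  simp only [Prod.mk.injEq] at this ⊢
  exact ⟨this.2, this.1⟩

/-- Tijdeman's dilation theorem for primes `q > M`: the sums `a + q b` are still distinct. In the group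
algebra of `ℤ_M` over `𝔽_q`, Frobenius turns the indicator of `B` into that of `q B`, so every
element of `ℤ_M` is represented a number of times that is `1` modulo `q`, hence at least once. -/
theorem IsTiling.injOn_add_prime_mul {M : ℕ} [NeZero M] {A B : Finset (ZMod M)}
    (h : IsTiling M A B) {q : ℕ} (hq : q.Prime) (hqM : M < q) :
    Set.InjOn (fun ab : ZMod M × ZMod M => ab.1 + (q : ZMod M) * ab.2) (A ×ˢ B : Finset _) := by
  have : Fact q.Prime := ⟨hq⟩
  have hchar : CharP (AddMonoidAlgebra (ZMod q) (ZMod M)) q :=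
    charP_of_injective_algebraMap (algebraMap (ZMod q) (AddMonoidAlgebra (ZMod q) (ZMod M))).injective q
  have hexp : ExpChar (AddMonoidAlgebra (ZMod q) (ZMod M)) q := ExpChar.prime hq
  let e : ZMod M → AddMonoidAlgebra (ZMod q) (ZMod M) := fun z => AddMonoidAlgebra.single z 1
  have he : ∀ x y, e x * e y = e (x + y) := fun x y => by
    simp [e, AddMonoidAlgebra.single_mul_single]
  have hpow : ∀ x, e x ^ q = e ((q : ZMod M) * x) := fun x => by
    simp [e, AddMonoidAlgebra.single_pow]
  have hσ : ∀ x, (∑ z, e z) * e x = ∑ z, e z := fun x => by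
    rw [Finset.sum_mul]
    simp only [he]
    exact Fintype.sum_equiv (Equiv.addRight x) _ _ (fun _ => rfl)
  have hσB : (∑ z, e z) * (∑ b ∈ B, e b) = (B.card : AddMonoidAlgebra (ZMod q) (ZMod M)) * ∑ z, e z := by
    rw [Finset.mul_sum]
    simp [hσ]
  have hσBk : ∀ k : ℕ, (∑ z, e z) * (∑ b ∈ B, e b) ^ k =
      (B.card : AddMonoidAlgebra (ZMod q) (ZMod M)) ^ k * ∑ z, e z := by
    intro k
    induction k with
    | zero => simp
    | succ k ih => rw [pow_succ, ← mul_assoc, ih, mul_assoc, hσB, pow_succ, mul_assoc]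
  have hAB : (∑ a ∈ A, e a) * (∑ b ∈ B, e b) = ∑ z, e z := by
    rw [Finset.sum_mul_sum, ← Finset.sum_product', ← h.sum_add e]
    simp only [he]
  have hB0 : ((B.card : ZMod q)) ≠ 0 := by
    rw [Ne, ZMod.natCast_eq_zero_iff]
    intro hd
    have hdvd : q ∣ M := h.card_mul ▸ hd.mul_left _
    exact absurd (Nat.le_of_dvd (NeZero.pos M) hdvd) (by omega)
  have hfermat : (B.card : AddMonoidAlgebra (ZMod q) (ZMod M)) ^ (q - 1) = 1 := by
    have h1 := ZMod.pow_card_sub_one_eq_one hB0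
    have h2 := congrArg (algebraMap (ZMod q) (AddMonoidAlgebra (ZMod q) (ZMod M))) h1
    rwa [map_pow, map_natCast, map_one] at h2
  -- With `σ` the sum of all group elements, `A(X) B(X^q) = A(X) B(X)^q = |B|^(q-1) σ = σ`.
  have key : ∑ ab ∈ A ×ˢ B, e (ab.1 + (q : ZMod M) * ab.2) = ∑ z, e z := by
    have h1 : (∑ a ∈ A, e a) * (∑ b ∈ B, e b) ^ q = ∑ z, e z := by
      obtain ⟨k, rfl⟩ : ∃ k, q = k + 1 := ⟨q - 1, by have := hq.pos; omega⟩
      rw [pow_succ', ← mul_assoc, hAB, hσBk]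
      simp only [Nat.add_sub_cancel] at hfermat
      rw [hfermat, one_mul]
    rw [sum_pow_char, Finset.sum_mul_sum, ← Finset.sum_product'] at h1
    simpa only [hpow, he] using h1
  refine Finset.injOn_of_surjOn_of_card_le (t := Finset.univ) _ (by simp [Set.MapsTo]) ?_ ?_
  · intro z _
    by_contra hz
    have hz' : ∀ ab ∈ A ×ˢ B, ab.1 + (q : ZMod M) * ab.2 ≠ z := by
      intro ab hab heq
      exact hz ⟨ab, hab, heq⟩
    have h1 := congrArg (fun f : AddMonoidAlgebra (ZMod q) (ZMod M) => f.coeff z) key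
    simp only [AddMonoidAlgebra.coeff_sum, Finsupp.finsetSum_apply, e,
      AddMonoidAlgebra.coeff_single, Finsupp.single_apply] at h1
    rw [Finset.sum_eq_zero (fun ab hab => if_neg (hz' ab hab))] at h1
    simp at h1
  · rw [Finset.card_product, h.card_mul]
    simp [ZMod.card]

/-- The direction of Sands's theorem used below: `Div(A) ∩ Div(B) = {M}`. If `a - a'` and `b - b'` have
the same gcd `g` with `M`, their quotients by `g` are units modulo `M / g`, and Dirichlet's theorem
realizes the ratio of these units as a prime `q > M`; then `a + q b' = a' + q b`. -/
theorem IsTiling.sub_eq_zero_of_gcd_eq {M : ℕ} [NeZero M] {A B : Finset (ZMod M)}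
    (h : IsTiling M A B) {a a' b b' : ZMod M} (ha : a ∈ A) (ha' : a' ∈ A) (hb : b ∈ B)
    (hb' : b' ∈ B) (hg : Nat.gcd (a - a').val M = Nat.gcd (b - b').val M) : a = a' := by
  have hM := NeZero.pos M
  set u := a - a' with hu
  set v := b - b' with hv
  set g := Nat.gcd u.val M with hgdef
  have hgpos : 0 < g := Nat.gcd_pos_of_pos_right _ hM
  obtain ⟨u', hu'⟩ : g ∣ u.val := Nat.gcd_dvd_left _ _
  obtain ⟨v', hv'⟩ : g ∣ v.val := hg ▸ Nat.gcd_dvd_left _ _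
  obtain ⟨N, hN⟩ : g ∣ M := Nat.gcd_dvd_right _ _
  have hNpos : 0 < N := Nat.pos_of_mul_pos_left (hN ▸ hM)
  have hNne : NeZero N := ⟨hNpos.ne'⟩
  have hcu : Nat.Coprime u' N := by
    have : g * Nat.gcd u' N = g * 1 := by
      rw [← Nat.gcd_mul_left, ← hu', ← hN, mul_one]
    exact Nat.eq_of_mul_eq_mul_left hgpos this
  have hcv : Nat.Coprime v' N := by
    have : g * Nat.gcd v' N = g * 1 := by
      rw [← Nat.gcd_mul_left, ← hv', ← hN, mul_one, ← hg]
    exact Nat.eq_of_mul_eq_mul_left hgpos this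
  let ru := ZMod.unitOfCoprime u' hcu
  let rv := ZMod.unitOfCoprime v' hcv
  obtain ⟨q, hqM, hq, hqe⟩ := Nat.forall_exists_prime_gt_and_eq_mod (ru * rv⁻¹).isUnit M
  have hmod : ((q * v' : ℕ) : ZMod N) = (u' : ℕ) := by
    have h1 : (v' : ZMod N) = rv := (ZMod.coe_unitOfCoprime v' hcv).symm
    have h2 : (u' : ZMod N) = ru := (ZMod.coe_unitOfCoprime u' hcu).symm
    rw [Nat.cast_mul, hqe, h1, h2, ← Units.val_mul, inv_mul_cancel_right]
  have huv : (q : ZMod M) * v = u := by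
    rw [← ZMod.natCast_zmod_val u, ← ZMod.natCast_zmod_val v, hu', hv', ← Nat.cast_mul,
      ZMod.natCast_eq_natCast_iff]
    rw [ZMod.natCast_eq_natCast_iff] at hmod
    have := hmod.mul_left' g
    rw [← hN] at this
    rwa [show q * (g * v') = g * (q * v') by ring]
  have hinj := h.injOn_add_prime_mul hq hqM (x₁ := (a, b')) (x₂ := (a', b))
    (by simp [ha, hb']) (by simp [ha', hb]) (by
      have : (q : ZMod M) * (b - b') = a - a' := huv
      show a + (q : ZMod M) * b' = a' + q * b
      linear_combination -this)
  exact (Prod.mk.inj hinj).1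

/-! ### The plane bound -/

/-- The number of elements of `S` whose canonical representative has remainder `r` modulo `k`
(so the count is `0` when `r ≥ k`). -/
def classCount {M : ℕ} (S : Finset (ZMod M)) (k r : ℕ) : ℕ :=
  (S.filter (fun b => b.val % k = r)).card

/-- Within each residue class modulo `p ^ t`, the elements of `S` are spread evenly over the `p`
classes modulo `p ^ (t + 1)`. Equivalently, `Φ_{p^(t+1)}` divides `∑ b ∈ S, X ^ b`. -/
def Equidistributed {M : ℕ} (p : ℕ) (S : Finset (ZMod M)) (t : ℕ) : Prop :=
  ∀ r < p ^ t, ∀ j < p, classCount S (p ^ (t + 1)) (r + p ^ t * j) = classCount S (p ^ (t + 1)) r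

theorem classCount_eq_sum {M : ℕ} (S : Finset (ZMod M)) {k p r : ℕ} (hp : 0 < p) (hr : r < k) :
    classCount S k r = ∑ j ∈ Finset.range p, classCount S (k * p) (r + k * j) := by
  unfold classCount
  rw [Finset.card_eq_sum_card_fiberwise (f := fun b : ZMod M => b.val / k % p)
    (t := Finset.range p) (fun b _ => by simpa using Nat.mod_lt _ hp)]
  refine Finset.sum_congr rfl fun j hj => ?_
  rw [Finset.filter_filter]
  congr 1
  refine Finset.filter_congr fun b _ => ?_
  rw [Nat.mod_mul]
  constructor
  · rintro ⟨h1, h2⟩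
    rw [h1, h2]
  · intro h
    have hk : 0 < k := by omega
    have h1 : b.val % k = r := by
      have := congrArg (· % k) h
      simpa [Nat.add_mul_mod_self_left, Nat.mod_eq_of_lt hr] using this
    refine ⟨h1, ?_⟩
    rw [h1] at h
    exact Nat.eq_of_mul_eq_mul_left hk (Nat.add_left_cancel h)

open Classical in
/-- Each equidistributed level above `s` contributes a factor `p` to the counts at level `s`. -/
theorem pow_levels_dvd_classCount {M p : ℕ} (hp : 0 < p) (S : Finset (ZMod M)) (d : ℕ) :
    ∀ s, ∀ r < p ^ s,
      p ^ ((Finset.Ico s (s + d)).filter (Equidistributed p S)).card ∣ classCount S (p ^ s) r := by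
  induction d with
  | zero => intro s r _; simp
  | succ d ih =>
    intro s r hr
    have hlt : ∀ j < p, r + p ^ s * j < p ^ (s + 1) := by
      intro j hj
      calc r + p ^ s * j < p ^ s + p ^ s * j := by omega
        _ = p ^ s * (j + 1) := by ring
        _ ≤ p ^ s * p := Nat.mul_le_mul_left _ hj
        _ = p ^ (s + 1) := (pow_succ _ _).symm
    have hI : Finset.Ico s (s + (d + 1)) = insert s (Finset.Ico (s + 1) (s + 1 + d)) := by
      ext x; simp; omega
    rw [classCount_eq_sum S hp hr, hI, Finset.filter_insert, ← pow_succ]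
    split_ifs with hE
    · rw [Finset.card_insert_of_notMem (by simp)]
      rw [Finset.sum_congr rfl (fun j hj => hE r hr j (Finset.mem_range.1 hj))]
      rw [Finset.sum_const, Finset.card_range, smul_eq_mul, pow_succ, mul_comm]
      exact Nat.mul_dvd_mul_left _ (ih (s + 1) r (by simpa using hlt 0 hp))
    · exact Finset.dvd_sum fun j hj => ih (s + 1) _ (hlt j (Finset.mem_range.1 hj))

open Classical in
/-- Each equidistributed level below `s` shrinks the class counts by a factor `p`. -/
theorem pow_levels_mul_classCount_le {M p : ℕ} (hp : 0 < p) (S : Finset (ZMod M)) (s : ℕ) :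
    ∀ r < p ^ s,
      p ^ ((Finset.range s).filter (Equidistributed p S)).card * classCount S (p ^ s) r
        ≤ S.card := by
  induction s with
  | zero => intro r _; simpa [classCount] using Finset.card_filter_le _ _
  | succ s ih =>
    intro r hr
    have hps : 0 < p ^ s := pow_pos hp s
    have hr0 : r % p ^ s < p ^ s := Nat.mod_lt _ hps
    have hj : r / p ^ s < p := by
      rw [Nat.div_lt_iff_lt_mul hps, mul_comm, ← pow_succ]; exact hr
    have hrj : r % p ^ s + p ^ s * (r / p ^ s) = r := Nat.mod_add_div _ _
    refine le_trans ?_ (ih _ hr0)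
    have hsum := classCount_eq_sum S hp hr0
    rw [← pow_succ] at hsum
    rw [Finset.range_add_one, Finset.filter_insert]
    split_ifs with hE
    · rw [Finset.card_insert_of_notMem (by simp), pow_succ, mul_assoc]
      refine Nat.mul_le_mul_left _ ?_
      have h1 := hE _ hr0 _ hj
      rw [hrj] at h1
      rw [hsum, Finset.sum_congr rfl (fun j hj => hE _ hr0 j (Finset.mem_range.1 hj)), h1]
      simp
    · refine Nat.mul_le_mul_left _ ?_
      rw [hsum]
      have := Finset.single_le_sum (s := Finset.range p)
        (f := fun j => classCount S (p ^ (s + 1)) (r % p ^ s + p ^ s * j))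
        (fun _ _ => Nat.zero_le _) (Finset.mem_range.2 hj)
      simpa [hrj] using this

open Polynomial in
/-- Multiplying by `X ^ (p ^ t) - 1` turns the divisor `Φ_{p^(t+1)}` into `X ^ (p ^ (t+1)) - 1`, so in the
group ring of `ℤ / p^(t+1)` the image of `∑ b ∈ S, X ^ b` is invariant under translation by `p ^ t`. -/
theorem equidistributed_of_cyclotomic_dvd {M p t : ℕ} (hp : p.Prime) (S : Finset (ZMod M))
    (hd : cyclotomic (p ^ (t + 1)) ℤ ∣ ∑ b ∈ S, (X : ℤ[X]) ^ b.val) :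
    Equidistributed p S t := by
  have : Fact p.Prime := ⟨hp⟩
  set K := p ^ (t + 1) with hK
  have hKpos : 0 < K := pow_pos hp.pos _
  obtain ⟨Q, hQ⟩ := hd
  have h1 : (X ^ p ^ t - 1 : ℤ[X]) * ∑ b ∈ S, (X : ℤ[X]) ^ b.val = (X ^ K - 1) * Q := by
    rw [hQ, ← mul_assoc, mul_comm (X ^ p ^ t - 1 : ℤ[X]),
      cyclotomic_prime_pow_mul_X_pow_sub_one]
  let R := AddMonoidAlgebra ℤ (ZMod K)
  have h2 := congrArg (aeval (AddMonoidAlgebra.single (1 : ZMod K) 1 : R)) h1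
  have hone : (AddMonoidAlgebra.single (1 : ZMod K) 1 : R) ^ K = 1 := by
    rw [AddMonoidAlgebra.single_pow, nsmul_one, ZMod.natCast_self, one_pow]; rfl
  simp only [map_mul, map_sub, map_pow, aeval_X, map_sum, hone, sub_self,
    sub_mul, one_mul, sub_eq_zero] at h2
  simp only [AddMonoidAlgebra.single_pow, Finset.mul_sum, AddMonoidAlgebra.single_mul_single,
    one_pow, nsmul_one, mul_one] at h2
  have h3 : ∀ r : ZMod K, (S.filter (fun b => ((b.val : ℕ) : ZMod K) = r)).card =
      (S.filter (fun b => ((b.val : ℕ) : ZMod K) = r + ((p ^ t : ℕ) : ZMod K))).card := by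
    intro r
    have h4 := congrArg (fun f : R => f.coeff (r + ((p ^ t : ℕ) : ZMod K))) h2
    simp only [AddMonoidAlgebra.coeff_sum, Finsupp.finsetSum_apply,
      AddMonoidAlgebra.coeff_single, Finsupp.single_apply] at h4
    rw [Finset.sum_boole, Finset.sum_boole] at h4
    have h5 : ∀ b : ZMod M, (((p ^ t : ℕ) : ZMod K) + (b.val : ZMod K) =
        r + ((p ^ t : ℕ) : ZMod K)) ↔ ((b.val : ZMod K) = r) := fun b => by
      rw [add_comm, add_left_inj]
    simp only [h5] at h4
    exact_mod_cast h4
  have h6 : ∀ r < K, classCount S K r =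
      (S.filter (fun b => ((b.val : ℕ) : ZMod K) = (r : ZMod K))).card := by
    intro r hr
    unfold classCount
    congr 1
    refine Finset.filter_congr fun b _ => ?_
    rw [ZMod.natCast_eq_natCast_iff', Nat.mod_eq_of_lt hr]
  intro r hr j hj
  have hlt : ∀ j < p, r + p ^ t * j < K := by
    intro j hj
    calc r + p ^ t * j < p ^ t + p ^ t * j := by omega
      _ = p ^ t * (j + 1) := by ring
      _ ≤ p ^ t * p := Nat.mul_le_mul_left _ hj
      _ = p ^ (t + 1) := (pow_succ _ _).symm
  induction j with
  | zero => simp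
  | succ j ih =>
    rw [← ih (by omega), h6 _ (hlt _ hj), h6 _ (hlt _ (by omega)),
      h3 ((r + p ^ t * j : ℕ) : ZMod K)]
    push_cast
    congr! 3
    ring

open Polynomial in
/-- At a primitive `p^(t+1)`-th root of unity the mask polynomials of `A` and `B` multiply to a full
geometric sum, which vanishes; so one of the two is divisible by `Φ_{p^(t+1)}`. -/
theorem IsTiling.equidistributed_or {M p t : ℕ} [NeZero M] {A B : Finset (ZMod M)}
    (h : IsTiling M A B) (hp : p.Prime) (ht : p ^ (t + 1) ∣ M) :
    Equidistributed p A t ∨ Equidistributed p B t := by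
  set K := p ^ (t + 1) with hK
  have hKpos : 0 < K := pow_pos hp.pos _
  have hK1 : 1 < K := Nat.one_lt_pow (by omega) hp.one_lt
  let ζ := Complex.exp (2 * Real.pi * Complex.I / (K : ℂ))
  have hζ : IsPrimitiveRoot ζ K := Complex.isPrimitiveRoot_exp K hKpos.ne'
  have hζM : ζ ^ M = 1 := (hζ.pow_eq_one_iff_dvd M).2 ht
  have hmod : ∀ k : ℕ, ζ ^ (k % M) = ζ ^ k := fun k => by
    conv_rhs => rw [← Nat.mod_add_div k M, pow_add, pow_mul, hζM, one_pow, mul_one]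
  have hsum : ∑ z : ZMod M, ζ ^ z.val = 0 := by
    have h1 : ∑ z : ZMod M, ζ ^ z.val = ∑ i ∈ Finset.range M, ζ ^ i := by
      refine Finset.sum_nbij (fun z => z.val) ?_ ?_ ?_ (fun _ _ => rfl)
      · intro z _; simpa using ZMod.val_lt z
      · exact fun x _ y _ hxy => ZMod.val_injective M hxy
      · intro i hi
        exact ⟨i, by simp, ZMod.val_natCast_of_lt (by simpa using hi)⟩
    have h2 := geom_sum_mul ζ M
    rw [hζM, sub_self] at h2
    rw [h1]
    exact (mul_eq_zero.1 h2).resolve_right (sub_ne_zero.2 (hζ.ne_one hK1))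
  have hprod : (∑ a ∈ A, ζ ^ a.val) * (∑ b ∈ B, ζ ^ b.val) = 0 := by
    rw [Finset.sum_mul_sum, ← Finset.sum_product', ← hsum,
      ← h.sum_add (fun z => ζ ^ z.val)]
    refine Finset.sum_congr rfl fun ab _ => ?_
    rw [ZMod.val_add, hmod, pow_add]
  have hdvd : ∀ S : Finset (ZMod M), ∑ b ∈ S, ζ ^ b.val = 0 → Equidistributed p S t := by
    intro S hS
    refine equidistributed_of_cyclotomic_dvd hp S ?_
    rw [← hK, cyclotomic_eq_minpoly hζ hKpos]
    exact minpoly.isIntegrallyClosed_dvd (hζ.isIntegral hKpos) (by simpa using hS)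
  exact (mul_eq_zero.1 hprod).imp (hdvd A) (hdvd B)

/-- The plane bound. The equidistributed levels of `A` and of `B` together cover all `n` levels, and
their numbers are bounded by the exponents of `p` in `|A|` and `|B|`, which add up to `n`. So `B` is
equidistributed at as many levels as `p` divides `|B|`, and a class modulo `p ^ n` contains at most the
part of `|B|` prime to `p`. -/
theorem IsTiling.classCount_le_gcd {M p n : ℕ} [NeZero M] {A B : Finset (ZMod M)}
    (h : IsTiling M A B) (hp : p.Prime) (hpn : p ^ n ∣ M) (hpn' : ¬ p ^ (n + 1) ∣ M)
    {r : ℕ} (hr : r < p ^ n) :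
    classCount B (p ^ n) r ≤ Nat.gcd B.card (M / p ^ n) := by
  classical
  have hM := NeZero.pos M
  set eA := ((Finset.range n).filter (Equidistributed p A)).card with heA
  set eB := ((Finset.range n).filter (Equidistributed p B)).card with heB
  have hdiv : ∀ S : Finset (ZMod M),
      p ^ ((Finset.range n).filter (Equidistributed p S)).card ∣ S.card := by
    intro S
    have := pow_levels_dvd_classCount hp.pos S n 0 0 (by simp)
    rw [zero_add, ← Finset.range_eq_Ico] at this
    simpa [classCount, Nat.mod_one] using this
  obtain ⟨a', ha'⟩ := hdiv A
  obtain ⟨b', hb'⟩ := hdiv B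
  rw [← heA] at ha'
  rw [← heB] at hb'
  have hsum : n ≤ eA + eB := by
    rw [heA, heB]
    refine le_trans ?_ (Finset.card_union_le _ _)
    rw [← Finset.filter_or, Finset.filter_true_of_mem, Finset.card_range]
    intro t ht
    exact h.equidistributed_or hp ((pow_dvd_pow p (Finset.mem_range.1 ht)).trans hpn)
  have hMeq : M = p ^ (eA + eB) * (a' * b') := by
    rw [← h.card_mul, ha', hb', pow_add]; ring
  have hpb : ¬ p ∣ b' := by
    rintro ⟨c, rfl⟩
    refine hpn' (((pow_dvd_pow p (Nat.succ_le_succ hsum))).trans ⟨a' * c, ?_⟩)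
    rw [hMeq, pow_succ]; ring
  have hcop : Nat.Coprime b' (p ^ n) :=
    (((Nat.Prime.coprime_iff_not_dvd hp).2 hpb).symm).pow_right n
  have hbm : b' ∣ M / p ^ n := by
    refine hcop.dvd_of_dvd_mul_left ?_
    rw [Nat.mul_div_cancel' hpn, hMeq]
    exact ((dvd_mul_left b' a').mul_left _)
  have hbB : b' ∣ B.card := hb' ▸ dvd_mul_left _ _
  have hle := pow_levels_mul_classCount_le hp.pos B n r hr
  rw [← heB, hb'] at hle
  have hle' := Nat.le_of_mul_le_mul_left hle (pow_pos hp.pos _)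
  refine hle'.trans (Nat.le_of_dvd ?_ (Nat.dvd_gcd hbB hbm))
  exact Nat.gcd_pos_of_pos_right _ (Nat.div_pos (Nat.le_of_dvd hM hpn) (pow_pos hp.pos _))

/-! ### Splitting of fibers -/

/-- Splitting for two points of a fiber: one of the two differences is divisible by `p ^ n`, and `p ^ (n-1)`
exactly divides the other. If neither were divisible by `p ^ n`, both would have the same gcd with
`M` as with `M / p`, and these agree since the sum of the differences is a multiple of `M / p`; this
contradicts Sands's theorem. -/
theorem IsTiling.pair_dichotomy {M p n : ℕ} [NeZero M] {A B : Finset (ZMod M)}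
    (h : IsTiling M A B) (hp : p.Prime) (hn : 1 ≤ n) (hpn : p ^ n ∣ M)
    (hpn' : ¬ p ^ (n + 1) ∣ M) {a a' b b' : ZMod M} (ha : a ∈ A) (ha' : a' ∈ A) (hb : b ∈ B)
    (hb' : b' ∈ B) {k : ℤ} (hk : ¬ (p : ℤ) ∣ k)
    (hkab : (a - a') + (b - b') = ((k * (M / p : ℕ) : ℤ) : ZMod M)) :
    (p ^ n ∣ (a - a').val ∧ p ^ (n - 1) ∣ (b - b').val ∧ ¬ p ^ n ∣ (b - b').val) ∨
    (p ^ n ∣ (b - b').val ∧ p ^ (n - 1) ∣ (a - a').val ∧ ¬ p ^ n ∣ (a - a').val) := by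
  set u := a - a' with hu
  set v := b - b' with hv
  have hpM : p ∣ M := (dvd_pow_self p (by omega)).trans hpn
  obtain ⟨D, hD⟩ := hpM
  have hDM : M / p = D := by rw [hD]; exact Nat.mul_div_cancel_left _ hp.pos
  obtain ⟨n, rfl⟩ : ∃ t, n = t + 1 := ⟨n - 1, by omega⟩
  simp only [Nat.add_sub_cancel]
  have hpD : p ^ n ∣ D := by
    rw [hD, pow_succ'] at hpn
    exact Nat.dvd_of_mul_dvd_mul_left hp.pos hpn
  have hpD' : ¬ p ^ (n + 1) ∣ D := by
    intro hc
    apply hpn'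
    rw [hD, pow_succ']
    exact Nat.mul_dvd_mul_left p hc
  have hMdvd : (M : ℤ) ∣ (u.val + v.val : ℤ) - k * D := by
    rw [← ZMod.intCast_zmod_eq_zero_iff_dvd]
    push_cast
    rw [ZMod.natCast_zmod_val, ZMod.natCast_zmod_val, hkab, hDM]
    push_cast
    ring
  have hDdvd : (D : ℤ) ∣ (u.val + v.val : ℤ) := by
    have h1 : (D : ℤ) ∣ (M : ℤ) := by rw [hD]; push_cast; exact dvd_mul_left _ _
    have h2 := (h1.trans hMdvd).add (dvd_mul_left (D : ℤ) k)
    simpa using h2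
  have hDnat : D ∣ u.val + v.val := by exact_mod_cast hDdvd
  have hnot : ¬ p ^ (n + 1) ∣ u.val + v.val := by
    intro hc
    have h1 : ((p ^ (n + 1) : ℕ) : ℤ) ∣ (u.val + v.val : ℤ) := by exact_mod_cast hc
    have h2 : ((p ^ (n + 1) : ℕ) : ℤ) ∣ k * D := by
      have h3 := (Int.natCast_dvd_natCast.2 hpn).trans hMdvd
      have h4 := h1.sub h3
      simpa using h4
    have hcop : IsCoprime ((p ^ (n + 1) : ℕ) : ℤ) k := by
      push_cast
      exact ((Nat.prime_iff_prime_int.1 hp).coprime_iff_not_dvd.2 hk).pow_left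
    exact hpD' (Int.natCast_dvd_natCast.1 (hcop.dvd_of_dvd_mul_left h2))
  have hdrop : ∀ g, g ∣ M → ¬ p ^ (n + 1) ∣ g → g ∣ D := by
    rintro g ⟨c, hc⟩ hg
    have hpc : p ∣ c := by
      by_contra hpc
      have hcop : Nat.Coprime (p ^ (n + 1)) c := ((Nat.Prime.coprime_iff_not_dvd hp).2 hpc).pow_left _
      exact hg (hcop.dvd_of_dvd_mul_right (hc ▸ hpn))
    obtain ⟨c', rfl⟩ := hpc
    refine ⟨c', Nat.eq_of_mul_eq_mul_left hp.pos ?_⟩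
    rw [← hD, hc]; ring
  have hDM' : D ∣ M := hD ▸ dvd_mul_left _ _
  have hgcd : ∀ x : ℕ, ¬ p ^ (n + 1) ∣ x → Nat.gcd x M = Nat.gcd x D := by
    intro x hx
    refine Nat.dvd_antisymm (Nat.dvd_gcd (Nat.gcd_dvd_left _ _) ?_) (Nat.gcd_dvd_gcd_of_dvd_right _ hDM')
    exact hdrop _ (Nat.gcd_dvd_right _ _) (fun hc => hx (hc.trans (Nat.gcd_dvd_left _ _)))
  have hneg : ∀ x y : ℕ, D ∣ x + y → Nat.gcd x D ∣ Nat.gcd y D := by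
    intro x y hxy
    refine Nat.dvd_gcd ?_ (Nat.gcd_dvd_right _ _)
    exact (Nat.dvd_add_right (Nat.gcd_dvd_left x D)).1 ((Nat.gcd_dvd_right x D).trans hxy)
  by_cases hpu : p ^ (n + 1) ∣ u.val
  · refine Or.inl ⟨hpu, ?_, fun hpv => hnot (hpu.add hpv)⟩
    exact (Nat.dvd_add_right ((pow_dvd_pow p n.le_succ).trans hpu)).1 (hpD.trans hDnat)
  by_cases hpv : p ^ (n + 1) ∣ v.val
  · refine Or.inr ⟨hpv, ?_, hpu⟩
    exact (Nat.dvd_add_left ((pow_dvd_pow p n.le_succ).trans hpv)).1 (hpD.trans hDnat)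
  exfalso
  have hEq : Nat.gcd u.val M = Nat.gcd v.val M := by
    rw [hgcd _ hpu, hgcd _ hpv]
    exact Nat.dvd_antisymm (hneg _ _ hDnat) (hneg _ _ (by rwa [add_comm]))
  have h0 := h.sub_eq_zero_of_gcd_eq ha ha' hb hb' hEq
  apply hpu
  simp [hu, h0]

theorem stmt15 (M p n : ℕ) [NeZero M] (hp : p.Prime) (hn : 1 ≤ n)
    (hpn : p ^ n ∣ M) (hpn' : ¬ p ^ (n + 1) ∣ M)
    (A B : Finset (ZMod M)) (h : IsTiling M A B)
    (hbig : Nat.gcd B.card (M / p ^ n) < p)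
    (hDiv : M / p ∉ DivSet M A) :
    ∀ x : ZMod M, SplitsParity M p n A B (fiberSet M p x) := by
  intro x
  have hpM : p ∣ M := (dvd_pow_self p (by omega)).trans hpn
  obtain ⟨D, hD⟩ := hpM
  have hDM : M / p = D := by rw [hD]; exact Nat.mul_div_cancel_left _ hp.pos
  have hDpos : 0 < D := Nat.pos_of_ne_zero fun h0 => NeZero.ne M (by rw [hD, h0, mul_zero])
  have hpnpos : 0 < p ^ n := pow_pos hp.pos n
  -- divisibility of differences by `p ^ n` is equality in `ZMod (p ^ n)`
  let φ : ZMod M →+* ZMod (p ^ n) := ZMod.castHom hpn _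
  have hφval : ∀ u : ZMod M, φ u = (u.val : ZMod (p ^ n)) := fun u => by
    conv_lhs => rw [← ZMod.natCast_zmod_val u]
    exact map_natCast φ _
  have hφ : ∀ u v : ZMod M, p ^ n ∣ (u - v).val ↔ φ u = φ v := fun u v => by
    rw [← sub_eq_zero (a := φ u), ← map_sub, hφval, ZMod.natCast_eq_zero_iff]
  choose f hf _ using fun ν : ℕ => h (x + ((ν * (M / p) : ℕ) : ZMod M))
  have huniq : ∀ a ∈ A, ∀ b ∈ B, ∀ ν : ℕ, a + b = x + ((ν * (M / p) : ℕ) : ZMod M) →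
      a = (f ν).1 ∧ b = (f ν).2 := by
    intro a ha b hb ν hab
    have := (h _).unique (y₁ := (a, b)) ⟨ha, hb, hab⟩ (hf ν)
    exact Prod.mk.inj this
  have hpair : ∀ ν < p, ∀ μ < p, ν ≠ μ →
      (φ (f ν).1 = φ (f μ).1 ∧ p ^ (n - 1) ∣ ((f ν).2 - (f μ).2).val ∧ φ (f ν).2 ≠ φ (f μ).2) ∨
      (φ (f ν).2 = φ (f μ).2 ∧ φ (f ν).1 ≠ φ (f μ).1) := by
    intro ν hν μ hμ hne
    have hk : ¬ (p : ℤ) ∣ (ν : ℤ) - μ := by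
      intro hd
      have := Int.eq_zero_of_abs_lt_dvd hd (by rw [abs_lt]; omega)
      omega
    have hsum : ((f ν).1 - (f μ).1) + ((f ν).2 - (f μ).2) =
        ((((ν : ℤ) - μ) * (M / p : ℕ) : ℤ) : ZMod M) := by
      have h1 := (hf ν).2.2
      have h2 := (hf μ).2.2
      rw [hDM] at h1 h2 ⊢
      push_cast at h1 h2 ⊢
      linear_combination h1 - h2
    have := h.pair_dichotomy hp hn hpn hpn' (hf ν).1 (hf μ).1 (hf ν).2.1 (hf μ).2.1 hk hsum
    simp only [hφ] at this
    tauto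
  -- If the `A`-components did not all agree modulo `p ^ n`, the fiber would split with parity `(B, A)`:
  -- all its `B`-components would lie in one class modulo `p ^ n`. By the plane bound two of them
  -- would coincide, which puts `M / p` into `Div(A)`.
  have hA : ∀ ν < p, ∀ μ < p, φ (f ν).1 = φ (f μ).1 := by
    by_contra! hcon
    obtain ⟨ν, hν, μ, hμ, hne⟩ := hcon
    have hswap : ∀ i < p, ∀ j < p, φ (f i).1 ≠ φ (f j).1 → φ (f i).2 = φ (f j).2 := by
      intro i hi j hj hij
      rcases eq_or_ne i j with rfl | hij'
      · rfl
      · rcases hpair i hi j hj hij' with h1 | h1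
        · exact absurd h1.1 hij
        · exact h1.1
    -- If `i` agrees with `ν` on the `A` side, it disagrees there with `μ`, and the `B`-components are
    -- compared through `μ`.
    have hB : ∀ i < p, φ (f i).2 = φ (f ν).2 := by
      intro i hi
      by_cases hi1 : φ (f i).1 = φ (f ν).1
      · rw [hswap i hi μ hμ (hi1 ▸ hne), hswap ν hν μ hμ hne]
      · exact hswap i hi ν hν hi1
    have hcard : (B.filter (fun b => b.val % p ^ n = (f ν).2.val % p ^ n)).card <
        (Finset.range p).card := by
      rw [Finset.card_range]
      exact (h.classCount_le_gcd hp hpn hpn' (Nat.mod_lt _ hpnpos)).trans_lt hbig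
    obtain ⟨i, hi, j, hj, hij, hfij⟩ :=
      Finset.exists_ne_map_eq_of_card_lt_of_maps_to hcard (f := fun i => (f i).2) (by
        intro i hi
        have h1 := hB i (by simpa using hi)
        rw [hφval, hφval, ZMod.natCast_eq_natCast_iff'] at h1
        simpa using ⟨(hf i).2.1, h1⟩)
    rw [Finset.mem_range] at hi hj
    have hmem : ∀ i < p, ∀ j < i, (f i).2 = (f j).2 → M / p ∈ DivSet M A := by
      intro i hi j hj hfij
      refine ⟨(f i).1, (hf i).1, (f j).1, (hf j).1, ?_⟩
      have hsub : (f i).1 - (f j).1 = (((i - j) * D : ℕ) : ZMod M) := by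
        have h1 := (hf i).2.2
        have h2 := (hf j).2.2
        rw [hDM] at h1 h2
        push_cast [Nat.cast_sub hj.le] at h1 h2 ⊢
        linear_combination h1 - h2 - hfij
      have hlt : (i - j) * D < M := by
        rw [hD]; exact Nat.mul_lt_mul_of_pos_right (by omega) hDpos
      have hcop : Nat.gcd (i - j) p = 1 :=
        (Nat.coprime_of_lt_prime (by omega) (by omega) hp).symm
      rw [hsub, ZMod.val_natCast_of_lt hlt, hDM]
      conv_rhs => rw [hD]
      rw [Nat.gcd_mul_right, hcop, one_mul]
    rcases lt_or_gt_of_ne hij with hlt | hlt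
    · exact hDiv (hmem j hj i hlt hfij.symm)
    · exact hDiv (hmem i hi j hlt hfij)
  constructor
  · rintro a ⟨ha, b, hb, ν, hν, hab⟩ a' ⟨ha', b', hb', μ, hμ, hab'⟩
    rw [hφ, (huniq a ha b hb ν hab).1, (huniq a' ha' b' hb' μ hab').1]
    exact hA ν hν μ hμ
  · rintro b ⟨hb, a, ha, ν, hν, hab⟩ b' ⟨hb', a', ha', μ, hμ, hab'⟩ hne
    rw [add_comm] at hab hab'
    have hbν := (huniq a ha b hb ν hab).2
    have hbμ := (huniq a' ha' b' hb' μ hab').2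
    have hνμ : ν ≠ μ := by
      rintro rfl
      exact hne (hbν.trans hbμ.symm)
    rw [hφ, hbν, hbμ]
    rcases hpair ν hν μ hμ hνμ with h1 | h1
    · exact h1.2
    · exact absurd (hA ν hν μ hμ) h1.2
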